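/- arXiv:quant-ph/0308088 — 2 statements merged into one kernel-verified Lean document; each statement's English description precedes it below -/
import Mathlib

section
/- Let {(p_k, |Ψ_k⟩)}_{k=1}^n be a finite pure-state ensemble for ρ^{AB}, i.e. ∑_k p_k |Ψ_k⟩⟨Ψ_k| = ρ^{AB} with unit vectors |Ψ_k⟩ ∈ H_A ⊗ H_B, and let (|k⟩)_{k=1}^n be an orthonormal basis of H_E = ℂⁿ. Then ρ^{ABE} = ∑_k p_k |Ψ_k⟩⟨Ψ_k| ⊗ |k⟩⟨k| is an extension of ρ^{AB} and satisfies (1/2) I(A;B|E) = ∑_k p_k S(Tr_B |Ψ_k⟩⟨Ψ_k|). -/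
open Matrix BigOperators Kronecker
open scoped Classical ComplexOrder

noncomputable section

/-- A (quantum) state: positive semidefinite matrix of trace 1. -/
def IsState {n : Type*} [Fintype n] (ρ : Matrix n n ℂ) : Prop :=
  ρ.PosSemidef ∧ ρ.trace = 1

/-- Von Neumann entropy (base 2), via the eigenvalues of a Hermitian matrix. -/
def vonNeumannEntropy {n : Type*} [Fintype n] (ρ : Matrix n n ℂ) : ℝ :=
  if h : ρ.IsHermitian then ∑ i, -(h.eigenvalues i * Real.logb 2 (h.eigenvalues i)) else 0

/-- Partial trace over the second (right) factor. -/
def ptraceR {A B : Type*} [Fintype A] [Fintype B]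
    (ρ : Matrix (A × B) (A × B) ℂ) : Matrix A A ℂ :=
  fun i j => ∑ b, ρ (i, b) (j, b)

/-- Partial trace over the first (left) factor. -/
def ptraceL {A B : Type*} [Fintype A] [Fintype B]
    (ρ : Matrix (A × B) (A × B) ℂ) : Matrix B B ℂ :=
  fun i j => ∑ a, ρ (a, i) (a, j)

variable {A B E : Type*} [Fintype A] [Fintype B] [Fintype E]

/-- Marginal of a tripartite state on `A × E` (trace out `B`). -/
def margAE (ρ : Matrix (A × B × E) (A × B × E) ℂ) : Matrix (A × E) (A × E) ℂ :=
  fun x y => ∑ b, ρ (x.1, b, x.2) (y.1, b, y.2)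

/-- Marginal of a tripartite state on `B × E` (trace out `A`). -/
def margBE (ρ : Matrix (A × B × E) (A × B × E) ℂ) : Matrix (B × E) (B × E) ℂ :=
  fun x y => ∑ a, ρ (a, x.1, x.2) (a, y.1, y.2)

/-- Marginal of a tripartite state on `E` (trace out `A` and `B`). -/
def margE (ρ : Matrix (A × B × E) (A × B × E) ℂ) : Matrix E E ℂ :=
  fun x y => ∑ a, ∑ b, ρ (a, b, x) (a, b, y)

/-- Marginal of a tripartite state on `A × B` (trace out `E`). -/
def margAB (ρ : Matrix (A × B × E) (A × B × E) ℂ) : Matrix (A × B) (A × B) ℂ :=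
  fun x y => ∑ e, ρ (x.1, x.2, e) (y.1, y.2, e)

/-- Quantum conditional mutual information `I(A;B|E) = S(AE)+S(BE)-S(ABE)-S(E)`. -/
def condMutualInfo (ρ : Matrix (A × B × E) (A × B × E) ℂ) : ℝ :=
  vonNeumannEntropy (margAE ρ) + vonNeumannEntropy (margBE ρ)
    - vonNeumannEntropy ρ - vonNeumannEntropy (margE ρ)

/-- Squashed entanglement: infimum of `(1/2) I(A;B|E)` over all finite-dimensional
extensions of `ρ`. -/
def Esq {A B : Type*} [Fintype A] [Fintype B] (ρ : Matrix (A × B) (A × B) ℂ) : ℝ :=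
  sInf { x : ℝ | ∃ (d : ℕ) (ρE : Matrix (A × B × Fin d) (A × B × Fin d) ℂ),
    IsState ρE ∧ margAB ρE = ρ ∧ x = (1 / 2) * condMutualInfo ρE }

/-- Outer product `|ψ⟩⟨ψ|`. -/
def outer {n : Type*} (ψ : n → ℂ) : Matrix n n ℂ :=
  Matrix.vecMulVec ψ (star ψ)

/-- Trace norm of a Hermitian matrix: sum of the absolute values of its eigenvalues. -/
def traceNorm {n : Type*} [Fintype n] (X : Matrix n n ℂ) : ℝ :=
  if h : X.IsHermitian then ∑ i, |h.eigenvalues i| else 0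

/-- Entanglement of formation: infimum of average entanglement entropy over all
finite pure-state ensembles for `ρ`. -/
def EoF {A B : Type*} [Fintype A] [Fintype B] (ρ : Matrix (A × B) (A × B) ℂ) : ℝ :=
  sInf { x : ℝ | ∃ (n : ℕ) (p : Fin n → ℝ) (ψ : Fin n → A × B → ℂ),
    (∀ k, 0 ≤ p k) ∧ (∑ k, p k) = 1 ∧ (∀ k, ∑ i, ‖ψ k i‖ ^ 2 = 1) ∧
    (∑ k, (p k : ℂ) • outer (ψ k)) = ρ ∧
    x = ∑ k, p k * vonNeumannEntropy (ptraceR (outer (ψ k))) }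

/-- The function `η` : `η(x) = -x log₂ x` for `x ≤ 1/4`, `1/2` otherwise. -/
def eta (x : ℝ) : ℝ := if x ≤ 1 / 4 then -(x * Real.logb 2 x) else 1 / 2

/-- The classical-flag extension `∑_k p_k |Ψ_k⟩⟨Ψ_k| ⊗ |k⟩⟨k|` of an ensemble. -/
def ensembleExtension {A B : Type*} (n : ℕ) (p : Fin n → ℝ) (ψ : Fin n → A × B → ℂ) :
    Matrix (A × B × Fin n) (A × B × Fin n) ℂ :=
  fun x y => if x.2.2 = y.2.2
    then (p x.2.2 : ℂ) * ψ x.2.2 (x.1, x.2.1) * star (ψ x.2.2 (y.1, y.2.1))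
    else 0

/-!
`E` carries a classical register, so all matrices involved are block diagonal and each of the four
entropies splits as `H(p)` plus an average over `k`. In `I(A;B|E)` the Shannon terms `H(p)` cancel,
leaving the average of the mutual informations `I(A;B)` of the `|Ψ_k⟩⟨Ψ_k|`. For a pure state,
`S(AB) = 0` and `S(A) = S(B)`, because `M Mᴴ` and `Mᴴ M` have the same nonzero spectrum when `M` is
the coefficient matrix of `Ψ_k`; hence `I(A;B) = 2 S(A)`.
-/

section BlockDiagonal

variable {m o : Type*}

lemma charpoly_blockDiagonal {R : Type*} [CommRing R] [Fintype m] [DecidableEq m] [Fintype o]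
    [DecidableEq o] (M : o → Matrix m m R) :
    (blockDiagonal M).charpoly = ∏ k, (M k).charpoly := by
  have charmatrix_eq : (blockDiagonal M).charmatrix = blockDiagonal fun k => (M k).charmatrix := by
    ext ⟨i, k⟩ ⟨j, l⟩ : 2
    by_cases hkl : k = l <;>
      simp [charmatrix_apply, blockDiagonal_apply, diagonal_apply, hkl]
  simp only [charpoly, charmatrix_eq, det_blockDiagonal]

lemma posSemidef_blockDiagonal {R : Type*} [Ring R] [PartialOrder R] [StarRing R] [AddLeftMono R]
    [Finite m] [Finite o] [DecidableEq o] {M : o → Matrix m m R} (hM : ∀ k, (M k).PosSemidef) :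
    (blockDiagonal M).PosSemidef := by
  have := Fintype.ofFinite m
  have := Fintype.ofFinite o
  refine .of_dotProduct_mulVec_nonneg
    (isHermitian_blockDiagonal_iff.mpr fun k => (hM k).isHermitian) fun x => ?_
  have quadratic_form_eq : star x ⬝ᵥ (blockDiagonal M *ᵥ x)
      = ∑ k, star (fun i => x (i, k)) ⬝ᵥ (M k *ᵥ fun i => x (i, k)) := by
    simp [dotProduct, mulVec, blockDiagonal_apply, Fintype.sum_prod_type_right]
  rw [quadratic_form_eq]
  exact Finset.sum_nonneg fun k _ => (hM k).dotProduct_mulVec_nonneg _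

end BlockDiagonal

section RootEntropy

open Polynomial

/-- The base-2 entropy `∑ -λ log₂ λ` of the real parts of the roots `λ` of a complex polynomial,
counted with multiplicity. Applied to characteristic polynomials it lets the von Neumann entropies
of matrices of different sizes be compared, since the root `0` contributes nothing. -/
def rootEntropy (P : ℂ[X]) : ℝ :=
  (P.roots.map fun z => Real.negMulLog z.re).sum / Real.log 2

lemma rootEntropy_mul {P Q : ℂ[X]} (hP : P ≠ 0) (hQ : Q ≠ 0) :
    rootEntropy (P * Q) = rootEntropy P + rootEntropy Q := by
  simp [rootEntropy, roots_mul (mul_ne_zero hP hQ), add_div]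

lemma rootEntropy_prod {ι : Type*} {s : Finset ι} {P : ι → ℂ[X]} (hP : ∀ i ∈ s, P i ≠ 0) :
    rootEntropy (∏ i ∈ s, P i) = ∑ i ∈ s, rootEntropy (P i) := by
  simp [rootEntropy, roots_prod P s (Finset.prod_ne_zero_iff.mpr hP), Multiset.map_bind,
    Multiset.sum_bind, Finset.sum_div]

lemma rootEntropy_X_pow (k : ℕ) : rootEntropy (X ^ k) = 0 := by
  simp [rootEntropy, Multiset.map_nsmul, Multiset.sum_nsmul]

lemma rootEntropy_prod_X_sub_C {ι : Type*} [Fintype ι] (d : ι → ℝ) :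
    rootEntropy (∏ i, (X - C (d i : ℂ))) = (∑ i, Real.negMulLog (d i)) / Real.log 2 := by
  rw [rootEntropy_prod fun i _ => X_sub_C_ne_zero _, Finset.sum_div]
  simp [rootEntropy]

lemma rootEntropy_charpoly_mul_comm {m n : Type*} [Fintype m] [DecidableEq m] [Fintype n]
    [DecidableEq n] (M : Matrix m n ℂ) (N : Matrix n m ℂ) :
    rootEntropy (M * N).charpoly = rootEntropy (N * M).charpoly := by
  have h := congrArg rootEntropy (charpoly_mul_comm' M N)
  simpa only [rootEntropy_mul (pow_ne_zero _ X_ne_zero) (charpoly_monic _).ne_zero,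
    rootEntropy_X_pow, zero_add] using h

end RootEntropy

section Entropy

variable {m n o : Type*}

lemma isHermitian_real_smul {M : Matrix n n ℂ} (hM : M.IsHermitian) (q : ℝ) :
    (q • M).IsHermitian :=
  hM.smul (IsSelfAdjoint.all q)

variable [Fintype m] [Fintype n] [Fintype o] [DecidableEq o]

lemma vonNeumannEntropy_eq_rootEntropy_charpoly [inst : DecidableEq m] {M : Matrix m m ℂ}
    (hM : M.IsHermitian) : vonNeumannEntropy M = rootEntropy M.charpoly := by
  -- `vonNeumannEntropy` is defined through the classical instance.
  obtain rfl : inst = fun i j => Classical.propDecidable (i = j) := Subsingleton.elim _ _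
  rw [vonNeumannEntropy, dif_pos hM, hM.charpoly_eq]
  refine Eq.trans ?_ (rootEntropy_prod_X_sub_C hM.eigenvalues).symm
  simp [Real.negMulLog, Real.logb, Finset.sum_div, mul_div_assoc, neg_div]

lemma vonNeumannEntropy_transpose {M : Matrix m m ℂ} (hM : M.IsHermitian) :
    vonNeumannEntropy Mᵀ = vonNeumannEntropy M := by
  rw [vonNeumannEntropy_eq_rootEntropy_charpoly hM.transpose,
    vonNeumannEntropy_eq_rootEntropy_charpoly hM, charpoly_transpose]

lemma vonNeumannEntropy_reindex (e : m ≃ n) {M : Matrix m m ℂ} (hM : M.IsHermitian) :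
    vonNeumannEntropy (reindex e e M) = vonNeumannEntropy M := by
  rw [vonNeumannEntropy_eq_rootEntropy_charpoly (hM.reindex e),
    vonNeumannEntropy_eq_rootEntropy_charpoly hM, charpoly_reindex]

lemma vonNeumannEntropy_mul_conjTranspose_self (M : Matrix m n ℂ) :
    vonNeumannEntropy (M * Mᴴ) = vonNeumannEntropy (Mᴴ * M) := by
  rw [vonNeumannEntropy_eq_rootEntropy_charpoly (isHermitian_mul_conjTranspose_self M),
    vonNeumannEntropy_eq_rootEntropy_charpoly (isHermitian_conjTranspose_mul_self M),
    rootEntropy_charpoly_mul_comm]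

lemma vonNeumannEntropy_diagonal (d : o → ℝ) :
    vonNeumannEntropy (diagonal fun i => (d i : ℂ))
      = (∑ i, Real.negMulLog (d i)) / Real.log 2 := by
  have hd : (diagonal fun i => (d i : ℂ)).IsHermitian :=
    isHermitian_diagonal_iff.mpr fun i => Complex.conj_ofReal (d i)
  rw [vonNeumannEntropy_eq_rootEntropy_charpoly hd, charpoly_diagonal, rootEntropy_prod_X_sub_C]

lemma vonNeumannEntropy_blockDiagonal {M : o → Matrix m m ℂ} (hM : ∀ k, (M k).IsHermitian) :
    vonNeumannEntropy (blockDiagonal M) = ∑ k, vonNeumannEntropy (M k) := by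
  rw [vonNeumannEntropy_eq_rootEntropy_charpoly (isHermitian_blockDiagonal_iff.mpr hM),
    charpoly_blockDiagonal, rootEntropy_prod fun k _ => (charpoly_monic _).ne_zero]
  simp only [vonNeumannEntropy_eq_rootEntropy_charpoly (hM _)]

lemma vonNeumannEntropy_smul {M : Matrix m m ℂ} (hM : M.IsHermitian) (q : ℝ) :
    vonNeumannEntropy (q • M)
      = q * vonNeumannEntropy M + M.trace.re * Real.negMulLog q / Real.log 2 := by
  have smul_eq_cfc : q • M = cfc (fun x : ℝ => q * x) M :=
    (cfc_const_mul_id q M hM.isSelfAdjoint).symm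
  have trace_eq : M.trace.re = ∑ i, hM.eigenvalues i := by
    simp [hM.trace_eq_sum_eigenvalues]
  have entropy_eq : vonNeumannEntropy M
      = (∑ i, Real.negMulLog (hM.eigenvalues i)) / Real.log 2 := by
    rw [vonNeumannEntropy_eq_rootEntropy_charpoly hM, hM.charpoly_eq]
    exact rootEntropy_prod_X_sub_C _
  have entropy_smul_eq : vonNeumannEntropy (q • M)
      = (∑ i, Real.negMulLog (q * hM.eigenvalues i)) / Real.log 2 := by
    rw [vonNeumannEntropy_eq_rootEntropy_charpoly (isHermitian_real_smul hM q), smul_eq_cfc,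
      hM.charpoly_cfc_eq]
    exact rootEntropy_prod_X_sub_C _
  simp only [entropy_smul_eq, entropy_eq, trace_eq, Real.negMulLog_mul, Finset.sum_add_distrib,
    ← Finset.mul_sum, ← Finset.sum_mul]
  ring

lemma vonNeumannEntropy_blockDiagonal_smul {M : o → Matrix m m ℂ} (hM : ∀ k, (M k).IsHermitian)
    (htr : ∀ k, (M k).trace = 1) (p : o → ℝ) :
    vonNeumannEntropy (blockDiagonal fun k => p k • M k)
      = ∑ k, p k * vonNeumannEntropy (M k)
        + vonNeumannEntropy (diagonal fun k => (p k : ℂ)) := by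
  rw [vonNeumannEntropy_blockDiagonal fun k => isHermitian_real_smul (hM k) (p k),
    vonNeumannEntropy_diagonal]
  simp [vonNeumannEntropy_smul (hM _), htr, Finset.sum_add_distrib, Finset.sum_div]

end Entropy

section PartialTrace

variable {a b : Type*} [Fintype a] [Fintype b]

lemma ptraceR_smul (q : ℝ) (M : Matrix (a × b) (a × b) ℂ) :
    ptraceR (q • M) = q • ptraceR M := by
  ext i j
  simp [ptraceR, Finset.mul_sum]

lemma ptraceL_smul (q : ℝ) (M : Matrix (a × b) (a × b) ℂ) :
    ptraceL (q • M) = q • ptraceL M := by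
  ext i j
  simp [ptraceL, Finset.mul_sum]

lemma trace_ptraceR (M : Matrix (a × b) (a × b) ℂ) : (ptraceR M).trace = M.trace := by
  simp [trace, ptraceR, Fintype.sum_prod_type]

lemma trace_ptraceL (M : Matrix (a × b) (a × b) ℂ) : (ptraceL M).trace = M.trace := by
  simp [trace, ptraceL, Fintype.sum_prod_type_right]

lemma isHermitian_ptraceR {M : Matrix (a × b) (a × b) ℂ} (hM : M.IsHermitian) :
    (ptraceR M).IsHermitian :=
  IsHermitian.ext fun i j => by simp only [ptraceR, star_sum, hM.apply]

lemma isHermitian_ptraceL {M : Matrix (a × b) (a × b) ℂ} (hM : M.IsHermitian) :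
    (ptraceL M).IsHermitian :=
  IsHermitian.ext fun i j => by simp only [ptraceL, star_sum, hM.apply]

/-- The quantum mutual information `I(A;B) = S(A) + S(B) - S(AB)`. -/
def mutualInfo (M : Matrix (a × b) (a × b) ℂ) : ℝ :=
  vonNeumannEntropy (ptraceR M) + vonNeumannEntropy (ptraceL M) - vonNeumannEntropy M

end PartialTrace

section PureState

variable {m a b : Type*}

lemma posSemidef_outer [Finite m] (v : m → ℂ) : (outer v).PosSemidef :=
  posSemidef_vecMulVec_self_star v

lemma trace_outer [Fintype m] (v : m → ℂ) :
    (outer v).trace = ((∑ i, ‖v i‖ ^ 2 : ℝ) : ℂ) := by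
  simp [outer, trace_vecMulVec, dotProduct, Complex.mul_conj']

lemma vonNeumannEntropy_outer [Fintype m] (v : m → ℂ) :
    vonNeumannEntropy (outer v) = Real.negMulLog (∑ i, ‖v i‖ ^ 2) / Real.log 2 := by
  have outer_eq : outer v = replicateCol Unit v * (replicateCol Unit v)ᴴ := by
    rw [conjTranspose_replicateCol, ← vecMulVec_eq]
    rfl
  have gram_eq : (replicateCol Unit v)ᴴ * replicateCol Unit v
      = diagonal fun _ => ((∑ i, ‖v i‖ ^ 2 : ℝ) : ℂ) := by
    ext
    simp [mul_apply, Complex.conj_mul']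
  rw [outer_eq, vonNeumannEntropy_mul_conjTranspose_self, gram_eq, vonNeumannEntropy_diagonal,
    Fintype.sum_unique]

variable [Fintype a] [Fintype b]

lemma vonNeumannEntropy_ptraceL_outer (v : a × b → ℂ) :
    vonNeumannEntropy (ptraceL (outer v)) = vonNeumannEntropy (ptraceR (outer v)) := by
  let M : Matrix a b ℂ := of fun i j => v (i, j)
  have ptraceR_eq : ptraceR (outer v) = M * Mᴴ := by
    ext
    simp [M, ptraceR, outer, mul_apply, vecMulVec_apply]
  have ptraceL_eq : ptraceL (outer v) = (Mᴴ * M)ᵀ := by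
    ext
    simp [M, ptraceL, outer, mul_apply, vecMulVec_apply, mul_comm]
  rw [ptraceR_eq, ptraceL_eq, vonNeumannEntropy_transpose (isHermitian_conjTranspose_mul_self M),
    vonNeumannEntropy_mul_conjTranspose_self]

lemma mutualInfo_outer {v : a × b → ℂ} (hv : ∑ i, ‖v i‖ ^ 2 = 1) :
    mutualInfo (outer v) = 2 * vonNeumannEntropy (ptraceR (outer v)) := by
  rw [mutualInfo, vonNeumannEntropy_ptraceL_outer, vonNeumannEntropy_outer, hv,
    Real.negMulLog_one, zero_div]
  ring

end PureState

section ClassicalExtension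

variable {a b o : Type*} [DecidableEq o]

/-- The operator `∑_k M_k ⊗ |k⟩⟨k|`, which extends `∑_k M_k` by a classical register `k`. -/
def classicalExtension (M : o → Matrix (a × b) (a × b) ℂ) :
    Matrix (a × b × o) (a × b × o) ℂ :=
  reindex (Equiv.prodAssoc a b o) (Equiv.prodAssoc a b o) (blockDiagonal M)

lemma classicalExtension_apply (M : o → Matrix (a × b) (a × b) ℂ) (x y : a × b × o) :
    classicalExtension M x y
      = if x.2.2 = y.2.2 then M x.2.2 (x.1, x.2.1) (y.1, y.2.1) else 0 :=
  rfl

lemma ensembleExtension_eq_classicalExtension (n : ℕ) (p : Fin n → ℝ)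
    (ψ : Fin n → a × b → ℂ) :
    ensembleExtension n p ψ = classicalExtension fun k => p k • outer (ψ k) := by
  ext
  simp [ensembleExtension, classicalExtension_apply, outer, vecMulVec_apply, mul_assoc]

lemma margAB_classicalExtension [Fintype o] (M : o → Matrix (a × b) (a × b) ℂ) :
    margAB (classicalExtension M) = ∑ k, M k := by
  ext
  simp [margAB, classicalExtension_apply, Matrix.sum_apply]

lemma posSemidef_classicalExtension [Finite a] [Finite b] [Finite o]
    {M : o → Matrix (a × b) (a × b) ℂ} (hM : ∀ k, (M k).PosSemidef) :
    (classicalExtension M).PosSemidef :=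
  (posSemidef_blockDiagonal hM).submatrix _

variable [Fintype a] [Fintype b]

lemma margAE_classicalExtension (M : o → Matrix (a × b) (a × b) ℂ) :
    margAE (classicalExtension M) = blockDiagonal fun k => ptraceR (M k) := by
  ext x y
  by_cases h : x.2 = y.2 <;>
    simp [margAE, ptraceR, classicalExtension_apply, blockDiagonal_apply, h]

lemma margBE_classicalExtension (M : o → Matrix (a × b) (a × b) ℂ) :
    margBE (classicalExtension M) = blockDiagonal fun k => ptraceL (M k) := by
  ext x y
  by_cases h : x.2 = y.2 <;>
    simp [margBE, ptraceL, classicalExtension_apply, blockDiagonal_apply, h]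

lemma margE_classicalExtension (M : o → Matrix (a × b) (a × b) ℂ) :
    margE (classicalExtension M) = diagonal fun k => (M k).trace := by
  ext k l
  by_cases h : k = l <;>
    simp [margE, trace, classicalExtension_apply, Fintype.sum_prod_type, h]

variable [Fintype o]

lemma trace_classicalExtension (M : o → Matrix (a × b) (a × b) ℂ) :
    (classicalExtension M).trace = ∑ k, (M k).trace := by
  rw [← trace_blockDiagonal]
  exact (Equiv.prodAssoc a b o).symm.sum_comp fun x => blockDiagonal M x x

lemma isState_classicalExtension_smul {M : o → Matrix (a × b) (a × b) ℂ} (hM : ∀ k, IsState (M k))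
    {p : o → ℝ} (hp : ∀ k, 0 ≤ p k) (hp1 : ∑ k, p k = 1) :
    IsState (classicalExtension fun k => p k • M k) := by
  refine ⟨posSemidef_classicalExtension fun k => (hM k).1.smul (hp k), ?_⟩
  rw [trace_classicalExtension]
  simp only [trace_smul, (hM _).2, Complex.real_smul, mul_one]
  exact_mod_cast hp1

lemma vonNeumannEntropy_classicalExtension {M : o → Matrix (a × b) (a × b) ℂ}
    (hM : ∀ k, (M k).IsHermitian) :
    vonNeumannEntropy (classicalExtension M) = vonNeumannEntropy (blockDiagonal M) :=
  vonNeumannEntropy_reindex _ (isHermitian_blockDiagonal_iff.mpr hM)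

lemma condMutualInfo_classicalExtension_smul {M : o → Matrix (a × b) (a × b) ℂ}
    (hM : ∀ k, (M k).IsHermitian) (htr : ∀ k, (M k).trace = 1) (p : o → ℝ) :
    condMutualInfo (classicalExtension fun k => p k • M k) = ∑ k, p k * mutualInfo (M k) := by
  have entropy_AE : vonNeumannEntropy (margAE (classicalExtension fun k => p k • M k))
      = ∑ k, p k * vonNeumannEntropy (ptraceR (M k))
        + vonNeumannEntropy (diagonal fun k => (p k : ℂ)) := by
    simp only [margAE_classicalExtension, ptraceR_smul]
    exact vonNeumannEntropy_blockDiagonal_smul (fun k => isHermitian_ptraceR (hM k))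
      (fun k => (trace_ptraceR _).trans (htr k)) p
  have entropy_BE : vonNeumannEntropy (margBE (classicalExtension fun k => p k • M k))
      = ∑ k, p k * vonNeumannEntropy (ptraceL (M k))
        + vonNeumannEntropy (diagonal fun k => (p k : ℂ)) := by
    simp only [margBE_classicalExtension, ptraceL_smul]
    exact vonNeumannEntropy_blockDiagonal_smul (fun k => isHermitian_ptraceL (hM k))
      (fun k => (trace_ptraceL _).trans (htr k)) p
  have entropy_ABE : vonNeumannEntropy (classicalExtension fun k => p k • M k)
      = ∑ k, p k * vonNeumannEntropy (M k)
        + vonNeumannEntropy (diagonal fun k => (p k : ℂ)) := by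
    rw [vonNeumannEntropy_classicalExtension fun k => isHermitian_real_smul (hM k) (p k),
      vonNeumannEntropy_blockDiagonal_smul hM htr]
  have marginal_E : margE (classicalExtension fun k => p k • M k)
      = diagonal fun k => (p k : ℂ) := by
    simp [margE_classicalExtension, trace_smul, htr]
  rw [condMutualInfo, entropy_AE, entropy_BE, entropy_ABE, marginal_E]
  simp only [mutualInfo, mul_sub, mul_add, Finset.sum_sub_distrib, Finset.sum_add_distrib]
  ring

end ClassicalExtension

/-- For a finite pure-state ensemble `{(p_k, |Ψ_k⟩)}` of `ρ^{AB}`, the state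
`ρ^{ABE} = ∑_k p_k |Ψ_k⟩⟨Ψ_k| ⊗ |k⟩⟨k|` is an extension of `ρ^{AB}` and satisfies
`(1/2) I(A;B|E) = ∑_k p_k S(Tr_B |Ψ_k⟩⟨Ψ_k|)`. -/
theorem ensembleExtension_is_extension_and_cmi
    {A B : Type*} [Fintype A] [Fintype B]
    (ρ : Matrix (A × B) (A × B) ℂ)
    (n : ℕ) (p : Fin n → ℝ) (ψ : Fin n → A × B → ℂ)
    (hp : ∀ k, 0 ≤ p k) (hp1 : (∑ k, p k) = 1)
    (hψ : ∀ k, ∑ i, ‖ψ k i‖ ^ 2 = 1)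
    (hens : (∑ k, (p k : ℂ) • outer (ψ k)) = ρ) :
    IsState (ensembleExtension n p ψ) ∧
    margAB (ensembleExtension n p ψ) = ρ ∧
    (1 / 2) * condMutualInfo (ensembleExtension n p ψ)
      = ∑ k, p k * vonNeumannEntropy (ptraceR (outer (ψ k))) := by
  have isState_outer (k) : IsState (outer (ψ k)) :=
    ⟨posSemidef_outer _, by rw [trace_outer, hψ k, Complex.ofReal_one]⟩
  rw [ensembleExtension_eq_classicalExtension]
  refine ⟨isState_classicalExtension_smul isState_outer hp hp1, ?_, ?_⟩
  · rw [margAB_classicalExtension, ← hens]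
    simp only [Complex.coe_smul]
  · rw [condMutualInfo_classicalExtension_smul (fun k => (isState_outer k).1.isHermitian)
      (fun k => (isState_outer k).2), Finset.mul_sum]
    refine Finset.sum_congr rfl fun k _ => ?_
    rw [mutualInfo_outer (hψ k)]
    ring

end
end

section
/- Squashed entanglement vanishes on separable states: if ρ^{AB} on H_A ⊗ H_B is separable, i.e. ρ^{AB} = ∑_i p_i |ψ_i⟩⟨ψ_i| ⊗ |φ_i⟩⟨φ_i| for some finite probability distribution (p_i) and unit vectors |ψ_i⟩ ∈ H_A, |φ_i⟩ ∈ H_B, then E_sq(ρ^{AB}) = 0. -/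
open Matrix BigOperators Kronecker
open scoped Classical ComplexOrder

noncomputable section

variable {A B E : Type*} [Fintype A] [Fintype B] [Fintype E]

/-
For positive semidefinite `ρ` and `σ`, completing the square shows that `⟨ρ, (s R + L)⁻¹ ρ⟩`, with
`R` right multiplication by `ρ` and `L` left multiplication by `σ`, is the maximum over `X` of
`2 Re ⟨X, ρ⟩ - s ⟨X, X ρ⟩ - ⟨X, σ X⟩`. Passing to the restrictions of `ρ` and `σ` along a
*-homomorphism only restricts the range of `X`, so this quantity can only decrease. Its integral
over `0 ≤ s ≤ t` equals `log t · Tr ρ + D(ρ‖σ) + o(1)` as `t → ∞`, so the relative entropy decreases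
too. For a partial trace this is strong subadditivity, whence `E_sq ≥ 0`.

For a separable state, attach a classical register recording the index `i`: the extension
`∑ p i |ψ i⟩⟨ψ i| ⊗ |φ i⟩⟨φ i| ⊗ |i⟩⟨i|`. This state and its marginals on `AE`, `BE` and `E` are
mixtures of orthonormal vectors with the same weights, so the four entropies in `I(A;B|E)` cancel.
-/

section RelativeEntropy

variable {n : Type*} [Fintype n] {ρ σ : Matrix n n ℂ}

/-- The support of `ρ` is contained in the support of `σ`, for Hermitian matrices: every matrix
annihilated by `σ` from the left is annihilated by `ρ`. Quantifying over square matrices rather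
than vectors makes the condition pass through *-homomorphisms. -/
def SupportLE (ρ σ : Matrix n n ℂ) : Prop :=
  ∀ X : Matrix n n ℂ, σ * X = 0 → ρ * X = 0

lemma SupportLE.mulVec_eq_zero (h : SupportLE ρ σ) {v : n → ℂ} (hv : σ *ᵥ v = 0) :
    ρ *ᵥ v = 0 := by
  have hρv : vecMulVec (ρ *ᵥ v) (star v) = 0 := by
    rw [← mul_vecMulVec]
    exact h _ (by rw [mul_vecMulVec, hv, zero_vecMulVec])
  rcases vecMulVec_eq_zero.mp hρv with hzero | hzero
  · exact hzero
  · rw [star_eq_zero.mp hzero, mulVec_zero]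

variable [DecidableEq n]

/-- Umegaki's relative entropy `D(ρ‖σ) = Tr ρ (log ρ - log σ)`, with natural logarithms. Because
`Real.log 0 = 0`, it is the usual (finite) quantity only when `SupportLE ρ σ`. -/
def relEntropy (ρ σ : Matrix n n ℂ) : ℝ :=
  (ρ * (cfc Real.log ρ - cfc Real.log σ)).trace.re

/-- The matrix of `X` from the eigenbasis of `ρ` (columns) to the eigenbasis of `σ` (rows). For
`X = 1` its entries are the overlaps of the two bases. -/
def eigenbasisMatrix (hρ : ρ.IsHermitian) (hσ : σ.IsHermitian) (X : Matrix n n ℂ) :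
    Matrix n n ℂ :=
  star (hσ.eigenvectorUnitary : Matrix n n ℂ) * X * (hρ.eigenvectorUnitary : Matrix n n ℂ)

lemma eigenbasisMatrix_surjective (hρ : ρ.IsHermitian) (hσ : σ.IsHermitian) :
    Function.Surjective (eigenbasisMatrix hρ hσ) := fun Y => by
  refine ⟨(hσ.eigenvectorUnitary : Matrix n n ℂ) * Y *
    star (hρ.eigenvectorUnitary : Matrix n n ℂ), ?_⟩
  simp only [eigenbasisMatrix, Matrix.mul_assoc, Unitary.coe_star_mul_self, Matrix.mul_one]
  rw [← Matrix.mul_assoc, Unitary.coe_star_mul_self, Matrix.one_mul]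

lemma mul_cfc (hρ : IsSelfAdjoint ρ) (f : ℝ → ℝ) :
    ρ * cfc f ρ = cfc (fun x => x * f x) ρ := by
  rw [cfc_mul (fun x : ℝ => x) f ρ continuousOn_id (ρ.finite_real_spectrum.continuousOn _),
    cfc_id' ℝ ρ hρ]

lemma trace_conjTranspose_mul_diagonal_mul_mul_diagonal (Y Z : Matrix n n ℂ) (g f : n → ℂ) :
    (Yᴴ * diagonal g * Z * diagonal f).trace =
      ∑ k, ∑ j, star (Y k j) * Z k j * (g k * f j) := by
  rw [Finset.sum_comm]
  simp only [Matrix.trace, diag_apply, mul_diagonal, Matrix.mul_apply (M := Yᴴ * diagonal g),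
    conjTranspose_apply, Finset.sum_mul]
  exact Finset.sum_congr rfl fun j _ => Finset.sum_congr rfl fun k _ => by ring

lemma re_trace_cfc (hρ : ρ.IsHermitian) (f : ℝ → ℝ) :
    (cfc f ρ).trace.re = ∑ i, f (hρ.eigenvalues i) := by
  rw [hρ.cfc_eq, IsHermitian.cfc, Unitary.conjStarAlgAut_apply, trace_mul_cycle,
    Unitary.coe_star_mul_self, Matrix.one_mul, trace_diagonal]
  simp

lemma trace_mul_cfc_mul_mul_cfc (hρ : ρ.IsHermitian) (hσ : σ.IsHermitian)
    (X Z : Matrix n n ℂ) (g f : ℝ → ℝ) :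
    (Xᴴ * cfc g σ * Z * cfc f ρ).trace =
      ∑ k, ∑ j, star (eigenbasisMatrix hρ hσ X k j) * eigenbasisMatrix hρ hσ Z k j *
        (g (hσ.eigenvalues k) * f (hρ.eigenvalues j) : ℝ) := by
  push_cast
  rw [← trace_conjTranspose_mul_diagonal_mul_mul_diagonal, hρ.cfc_eq, hσ.cfc_eq]
  simp only [IsHermitian.cfc, Unitary.conjStarAlgAut_apply, eigenbasisMatrix, conjTranspose_mul,
    star_eq_conjTranspose, conjTranspose_conjTranspose]
  rw [← Matrix.mul_assoc, ← Matrix.mul_assoc, trace_mul_comm]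
  simp only [Matrix.mul_assoc]
  rfl

lemma re_trace_cfc_mul_cfc (hρ : ρ.IsHermitian) (hσ : σ.IsHermitian) (f g : ℝ → ℝ) :
    (cfc f ρ * cfc g σ).trace.re =
      ∑ k, ∑ j, ‖eigenbasisMatrix hρ hσ 1 k j‖ ^ 2 *
        (f (hρ.eigenvalues j) * g (hσ.eigenvalues k)) := by
  have h := trace_mul_cfc_mul_mul_cfc hρ hσ 1 1 g f
  rw [conjTranspose_one, Matrix.one_mul, Matrix.mul_one, trace_mul_comm] at h
  simp only [h, Complex.re_sum, Complex.re_mul_ofReal, Complex.star_def, Complex.conj_mul',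
    mul_comm (g _)]
  norm_cast

lemma relEntropy_eq_sum (hρ : ρ.IsHermitian) (hσ : σ.IsHermitian) :
    relEntropy ρ σ = ∑ k, ∑ j, ‖eigenbasisMatrix hρ hσ 1 k j‖ ^ 2 *
      (hρ.eigenvalues j *
        (Real.log (hρ.eigenvalues j) - Real.log (hσ.eigenvalues k))) := by
  have hentropy : ρ * cfc Real.log ρ =
      cfc (fun x => x * Real.log x) ρ * cfc (fun _ : ℝ => (1 : ℝ)) σ := by
    rw [cfc_const_one ℝ σ hσ.isSelfAdjoint, Matrix.mul_one, mul_cfc hρ.isSelfAdjoint]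
  have hcross : ρ * cfc Real.log σ = cfc (fun x : ℝ => x) ρ * cfc Real.log σ := by
    rw [cfc_id' ℝ ρ hρ.isSelfAdjoint]
  rw [relEntropy, Matrix.mul_sub, trace_sub, Complex.sub_re, hentropy, hcross,
    re_trace_cfc_mul_cfc hρ hσ, re_trace_cfc_mul_cfc hρ hσ]
  simp only [← Finset.sum_sub_distrib]
  exact Finset.sum_congr rfl fun k _ => Finset.sum_congr rfl fun j _ => by ring

lemma re_trace_eq_sum (hρ : ρ.IsHermitian) (hσ : σ.IsHermitian) :
    ρ.trace.re = ∑ k, ∑ j, ‖eigenbasisMatrix hρ hσ 1 k j‖ ^ 2 * hρ.eigenvalues j := by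
  have h := re_trace_cfc_mul_cfc hρ hσ (fun x => x) (fun _ => 1)
  rw [cfc_const_one ℝ σ hσ.isSelfAdjoint, cfc_id' ℝ ρ hρ.isSelfAdjoint, Matrix.mul_one] at h
  simpa only [mul_one] using h

/-- The functional `X ↦ 2 Re ⟨X, ρ⟩ - s ⟨X, X ρ⟩ - ⟨X, σ X⟩` in the Hilbert–Schmidt inner product,
whose maximum is `modularResolvent`. -/
def modularFunctional (ρ σ : Matrix n n ℂ) (s : ℝ) (X : Matrix n n ℂ) : ℝ :=
  2 * (Xᴴ * ρ).trace.re - s * (Xᴴ * X * ρ).trace.re - (X * Xᴴ * σ).trace.re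

/-- The quadratic form `⟨ρ, (s R + L)⁻¹ ρ⟩` in the Hilbert–Schmidt inner product, where `R` is
right multiplication by `ρ` and `L` is left multiplication by `σ`, written in the eigenbases. The
convention `0 / 0 = 0` makes the inverse a pseudo-inverse. -/
def modularResolvent (hρ : ρ.IsHermitian) (hσ : σ.IsHermitian) (s : ℝ) : ℝ :=
  ∑ k, ∑ j, ‖eigenbasisMatrix hρ hσ 1 k j‖ ^ 2 *
    (hρ.eigenvalues j ^ 2 / (s * hρ.eigenvalues j + hσ.eigenvalues k))

lemma modularFunctional_eq_sum (hρ : ρ.IsHermitian) (hσ : σ.IsHermitian) (s : ℝ)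
    (X : Matrix n n ℂ) :
    modularFunctional ρ σ s X = ∑ k, ∑ j,
      (2 * (star (eigenbasisMatrix hρ hσ X k j) * eigenbasisMatrix hρ hσ 1 k j).re *
          hρ.eigenvalues j -
        (s * hρ.eigenvalues j + hσ.eigenvalues k) * ‖eigenbasisMatrix hρ hσ X k j‖ ^ 2) := by
  have hlinear := trace_mul_cfc_mul_mul_cfc hρ hσ X 1 (fun _ => 1) (fun x => x)
  have hright := trace_mul_cfc_mul_mul_cfc hρ hσ X X (fun _ => 1) (fun x => x)
  have hleft := trace_mul_cfc_mul_mul_cfc hρ hσ X X (fun x => x) (fun _ => 1)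
  rw [cfc_const_one ℝ σ hσ.isSelfAdjoint, cfc_id' ℝ ρ hρ.isSelfAdjoint, Matrix.mul_one]
    at hlinear hright
  rw [cfc_const_one ℝ ρ hρ.isSelfAdjoint, cfc_id' ℝ σ hσ.isSelfAdjoint, Matrix.mul_one,
    Matrix.mul_assoc, trace_mul_comm, Matrix.mul_assoc, trace_mul_comm] at hleft
  rw [Matrix.mul_one] at hlinear
  have hnorm (z : ℂ) (r : ℝ) : (star z * z * r).re = ‖z‖ ^ 2 * r := by
    rw [Complex.star_def, Complex.conj_mul']
    norm_cast
  rw [modularFunctional, hlinear, hright, hleft]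
  simp only [Complex.re_sum, hnorm, Complex.re_mul_ofReal, Finset.mul_sum,
    ← Finset.sum_sub_distrib]
  exact Finset.sum_congr rfl fun k _ => Finset.sum_congr rfl fun j _ => by ring

lemma two_mul_re_mul_sub_eq (x w : ℂ) (p : ℝ) {c : ℝ} (hc : c ≠ 0) :
    2 * (star x * w).re * p - c * ‖x‖ ^ 2 =
      ‖w‖ ^ 2 * (p ^ 2 / c) - c * ‖x - (p / c : ℝ) * w‖ ^ 2 := by
  simp only [← Complex.normSq_eq_norm_sq, Complex.normSq_apply, Complex.star_def, Complex.mul_re,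
    Complex.mul_im, Complex.conj_re, Complex.conj_im, Complex.sub_re, Complex.sub_im,
    Complex.ofReal_re, Complex.ofReal_im]
  field_simp
  ring

lemma modularFunctional_eq_modularResolvent_sub (hρ : ρ.PosSemidef) (hσ : σ.PosSemidef) {s : ℝ}
    (hs : 0 < s) (X : Matrix n n ℂ) :
    modularFunctional ρ σ s X = modularResolvent hρ.1 hσ.1 s - ∑ k, ∑ j,
      (s * hρ.1.eigenvalues j + hσ.1.eigenvalues k) *
        ‖eigenbasisMatrix hρ.1 hσ.1 X k j -
          (hρ.1.eigenvalues j / (s * hρ.1.eigenvalues j + hσ.1.eigenvalues k) : ℝ) *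
            eigenbasisMatrix hρ.1 hσ.1 1 k j‖ ^ 2 := by
  simp only [modularFunctional_eq_sum hρ.1 hσ.1, modularResolvent, ← Finset.sum_sub_distrib]
  refine Finset.sum_congr rfl fun k _ => Finset.sum_congr rfl fun j _ => ?_
  have hp := hρ.eigenvalues_nonneg j
  have hq := hσ.eigenvalues_nonneg k
  rcases hp.eq_or_lt' with hp0 | hp0
  · simp [hp0]
  · exact two_mul_re_mul_sub_eq _ _ _ (by positivity)

lemma isGreatest_modularResolvent (hρ : ρ.PosSemidef) (hσ : σ.PosSemidef) {s : ℝ} (hs : 0 < s) :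
    IsGreatest (Set.range (modularFunctional ρ σ s)) (modularResolvent hρ.1 hσ.1 s) := by
  constructor
  · obtain ⟨X, hX⟩ := eigenbasisMatrix_surjective hρ.1 hσ.1 (of fun k j =>
      (hρ.1.eigenvalues j / (s * hρ.1.eigenvalues j + hσ.1.eigenvalues k) : ℝ) *
        eigenbasisMatrix hρ.1 hσ.1 1 k j)
    exact ⟨X, by simp [modularFunctional_eq_modularResolvent_sub hρ hσ hs, hX]⟩
  · rintro _ ⟨X, rfl⟩
    rw [modularFunctional_eq_modularResolvent_sub hρ hσ hs, sub_le_self_iff]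
    refine Finset.sum_nonneg fun k _ => Finset.sum_nonneg fun j _ => ?_
    have hp := hρ.eigenvalues_nonneg j
    have hq := hσ.eigenvalues_nonneg k
    positivity

/-- The integral of `modularResolvent` over `[0, s]`, in closed form. -/
def modularLogSum (hρ : ρ.IsHermitian) (hσ : σ.IsHermitian) (s : ℝ) : ℝ :=
  ∑ k, ∑ j, ‖eigenbasisMatrix hρ hσ 1 k j‖ ^ 2 * (hρ.eigenvalues j *
    (Real.log (s * hρ.eigenvalues j + hσ.eigenvalues k) - Real.log (hσ.eigenvalues k)))

lemma modularLogSum_zero (hρ : ρ.IsHermitian) (hσ : σ.IsHermitian) :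
    modularLogSum hρ hσ 0 = 0 := by
  simp [modularLogSum]

lemma SupportLE.eigenbasisMatrix_eq_zero_or (h : SupportLE ρ σ) (hρ : ρ.IsHermitian)
    (hσ : σ.IsHermitian) {k : n} (hk : hσ.eigenvalues k = 0) (j : n) :
    eigenbasisMatrix hρ hσ 1 k j = 0 ∨ hρ.eigenvalues j = 0 := by
  let u : n → ℂ := ⇑(hρ.eigenvectorBasis j)
  let v : n → ℂ := ⇑(hσ.eigenvectorBasis k)
  have hentry : eigenbasisMatrix hρ hσ 1 k j = star v ⬝ᵥ u := by
    simp [eigenbasisMatrix, Matrix.mul_apply, dotProduct, u, v]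
  have hkernel : ρ *ᵥ v = 0 := h.mulVec_eq_zero (by simp [v, hσ.mulVec_eigenvectorBasis, hk])
  have hkernel' : star v ᵥ* ρ = 0 := by
    simpa only [star_mulVec, hρ.eq, star_zero] using congrArg star hkernel
  have hproduct : hρ.eigenvalues j • (star v ⬝ᵥ u) = 0 := by
    rw [← dotProduct_smul, ← hρ.mulVec_eigenvectorBasis j, dotProduct_mulVec, hkernel',
      zero_dotProduct]
  rw [hentry]
  exact (smul_eq_zero.mp hproduct).symm

lemma hasDerivAt_modularLogSum (hρ : ρ.PosSemidef) (hσ : σ.PosSemidef) (h : SupportLE ρ σ)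
    {s : ℝ} (hs : 0 ≤ s) :
    HasDerivAt (modularLogSum hρ.1 hσ.1) (modularResolvent hρ.1 hσ.1 s) s := by
  refine HasDerivAt.fun_sum fun k _ => HasDerivAt.fun_sum fun j _ => ?_
  have hp := hρ.eigenvalues_nonneg j
  rcases (hσ.eigenvalues_nonneg k).eq_or_lt' with hq | hq
  · rcases h.eigenbasisMatrix_eq_zero_or hρ.1 hσ.1 hq j with hw | hp0
    · simpa [hw] using hasDerivAt_const s (0 : ℝ)
    · simpa [hp0] using hasDerivAt_const s (0 : ℝ)
  · have hlinear : HasDerivAt (fun s => s * hρ.1.eigenvalues j + hσ.1.eigenvalues k)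
        (1 * hρ.1.eigenvalues j) s := ((hasDerivAt_id s).mul_const _).add_const _
    refine ((((hlinear.log (by positivity)).sub_const _).const_mul _).const_mul _).congr_deriv ?_
    ring

lemma tendsto_mul_log_mul_add_sub_log {p q : ℝ} (hp : 0 ≤ p) :
    Filter.Tendsto (fun s => p * (Real.log (s * p + q) - Real.log s)) Filter.atTop
      (nhds (p * Real.log p)) := by
  rcases hp.eq_or_lt with rfl | hp
  · simp
  have hsum : Filter.Tendsto (fun s : ℝ => p + q / s) Filter.atTop (nhds p) := by
    simpa using (Filter.Tendsto.const_div_atTop Filter.tendsto_id q).const_add p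
  refine ((hsum.log hp.ne').const_mul p).congr' ?_
  filter_upwards [Filter.eventually_gt_atTop 0, hsum.eventually (lt_mem_nhds hp)] with s hs hps
  rw [show s * p + q = s * (p + q / s) by field_simp, Real.log_mul hs.ne' hps.ne',
    add_sub_cancel_left]

lemma tendsto_modularLogSum_sub_log_mul_trace (hρ : ρ.PosSemidef) (hσ : σ.IsHermitian) :
    Filter.Tendsto (fun s => modularLogSum hρ.1 hσ s - Real.log s * ρ.trace.re) Filter.atTop
      (nhds (relEntropy ρ σ)) := by
  have hexpand (s : ℝ) : modularLogSum hρ.1 hσ s - Real.log s * ρ.trace.re =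
      ∑ k, ∑ j, ‖eigenbasisMatrix hρ.1 hσ 1 k j‖ ^ 2 *
        (hρ.1.eigenvalues j *
            (Real.log (s * hρ.1.eigenvalues j + hσ.eigenvalues k) - Real.log s) -
          hρ.1.eigenvalues j * Real.log (hσ.eigenvalues k)) := by
    simp only [modularLogSum, re_trace_eq_sum hρ.1 hσ, Finset.mul_sum, ← Finset.sum_sub_distrib]
    exact Finset.sum_congr rfl fun k _ => Finset.sum_congr rfl fun j _ => by ring
  rw [funext hexpand, relEntropy_eq_sum hρ.1 hσ]
  refine tendsto_finsetSum _ fun k _ => tendsto_finsetSum _ fun j _ => ?_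
  rw [mul_sub (hρ.1.eigenvalues j)]
  exact ((tendsto_mul_log_mul_add_sub_log (hρ.eigenvalues_nonneg j)).sub_const _).const_mul _

end RelativeEntropy

section VonNeumannEntropy

variable {m n : Type*} [Fintype m] [Fintype n] {ρ : Matrix n n ℂ}

lemma vonNeumannEntropy_eq_trace_log [inst : DecidableEq n] (hρ : ρ.IsHermitian) :
    vonNeumannEntropy ρ = -(ρ * cfc Real.log ρ).trace.re / Real.log 2 := by
  obtain rfl : inst = fun a b => Classical.propDecidable (a = b) := Subsingleton.elim _ _
  rw [vonNeumannEntropy, dif_pos hρ, mul_cfc hρ.isSelfAdjoint, re_trace_cfc hρ,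
    ← Finset.sum_neg_distrib, Finset.sum_div]
  exact Finset.sum_congr rfl fun i _ => by rw [Real.logb]; ring

lemma vonNeumannEntropy_eq_sum_roots [inst : DecidableEq n] (hρ : ρ.IsHermitian) :
    vonNeumannEntropy ρ =
      (ρ.charpoly.roots.map fun z : ℂ => -(z.re * Real.logb 2 z.re)).sum := by
  obtain rfl : inst = fun a b => Classical.propDecidable (a = b) := Subsingleton.elim _ _
  rw [hρ.roots_charpoly_eq_eigenvalues, vonNeumannEntropy, dif_pos hρ, Multiset.map_map]
  rfl

lemma vonNeumannEntropy_mul_comm (X : Matrix m n ℂ) (Y : Matrix n m ℂ)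
    (hXY : (X * Y).IsHermitian) (hYX : (Y * X).IsHermitian) :
    vonNeumannEntropy (X * Y) = vonNeumannEntropy (Y * X) := by
  rw [vonNeumannEntropy_eq_sum_roots hXY, vonNeumannEntropy_eq_sum_roots hYX]
  have hroots := congrArg Polynomial.roots (Matrix.charpoly_mul_comm' X Y)
  have hpow (k : ℕ) : (Polynomial.X ^ k : Polynomial ℂ) ≠ 0 := pow_ne_zero _ Polynomial.X_ne_zero
  rw [Polynomial.roots_mul (mul_ne_zero (hpow _) (Matrix.charpoly_monic _).ne_zero),
    Polynomial.roots_mul (mul_ne_zero (hpow _) (Matrix.charpoly_monic _).ne_zero)] at hroots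
  simpa [Polynomial.roots_X_pow, Multiset.map_nsmul, Multiset.sum_nsmul] using congrArg
    (fun s : Multiset ℂ => (s.map fun z => -(z.re * Real.logb 2 z.re)).sum) hroots

end VonNeumannEntropy

section Restriction

variable {m n : Type*} [Fintype m] [Fintype n] {ρ σ : Matrix n n ℂ} {ρ' σ' : Matrix m m ℂ}

open scoped MatrixOrder in
lemma mul_eq_zero_iff_trace_eq_zero (hσ : σ.PosSemidef) (X : Matrix n m ℂ) :
    σ * X = 0 ↔ (Xᴴ * σ * X).trace = 0 := by
  refine ⟨fun h => by rw [Matrix.mul_assoc, h, Matrix.mul_zero, trace_zero], fun h => ?_⟩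
  obtain ⟨Y, rfl⟩ := CStarAlgebra.nonneg_iff_eq_star_mul_self.mp hσ.nonneg
  have hYX : ((Y * X)ᴴ * (Y * X)).trace = 0 := by
    simpa only [conjTranspose_mul, star_eq_conjTranspose, Matrix.mul_assoc] using h
  rw [Matrix.mul_assoc, trace_conjTranspose_mul_self_eq_zero_iff.mp hYX, Matrix.mul_zero]

variable [DecidableEq m] [DecidableEq n] {Φ : Matrix m m ℂ →⋆ₐ[ℂ] Matrix n n ℂ}

open scoped MatrixOrder in
lemma posSemidef_starAlgHom_apply (Φ : Matrix m m ℂ →⋆ₐ[ℂ] Matrix n n ℂ) (hρ' : ρ'.PosSemidef) :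
    (Φ ρ').PosSemidef := by
  obtain ⟨Y, rfl⟩ := CStarAlgebra.nonneg_iff_eq_star_mul_self.mp hρ'.nonneg
  rw [map_mul, map_star]
  exact posSemidef_conjTranspose_mul_self _

/-- `ρ'` is the restriction of `ρ` along the *-homomorphism `Φ`, with a matrix viewed as the linear
functional `Z ↦ Tr (Z ρ)`. Partial traces are the case where `Φ` is an `ampliation`. -/
def IsRestriction (Φ : Matrix m m ℂ →⋆ₐ[ℂ] Matrix n n ℂ) (ρ : Matrix n n ℂ)
    (ρ' : Matrix m m ℂ) : Prop :=
  ∀ Z, (Z * ρ').trace = (Φ Z * ρ).trace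

namespace IsRestriction

lemma trace_eq (h : IsRestriction Φ ρ ρ') : ρ'.trace = ρ.trace := by
  simpa using h 1

lemma isHermitian (h : IsRestriction Φ ρ ρ') (hρ : ρ.IsHermitian) : ρ'.IsHermitian := by
  refine ext_iff_trace_mul_left.mpr fun Z => ?_
  calc (Z * ρ'ᴴ).trace = star (Zᴴ * ρ').trace := by
        rw [← trace_conjTranspose, conjTranspose_mul, conjTranspose_conjTranspose, trace_mul_comm]
    _ = star ((Φ Z)ᴴ * ρ).trace := by
        rw [h, ← star_eq_conjTranspose, map_star, star_eq_conjTranspose]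
    _ = (Z * ρ').trace := by
        rw [← trace_conjTranspose, conjTranspose_mul, conjTranspose_conjTranspose, hρ.eq,
          trace_mul_comm, h]

lemma trace_conjTranspose_mul_mul (h : IsRestriction Φ ρ ρ') (X : Matrix m m ℂ) :
    (Xᴴ * ρ' * X).trace = ((Φ X)ᴴ * ρ * Φ X).trace := by
  rw [trace_mul_cycle, h, map_mul, ← star_eq_conjTranspose, map_star, star_eq_conjTranspose,
    trace_mul_cycle _ ρ]

open scoped MatrixOrder in
lemma posSemidef (h : IsRestriction Φ ρ ρ') (hρ : ρ.PosSemidef) : ρ'.PosSemidef := by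
  refine .of_dotProduct_mulVec_nonneg (h.isHermitian hρ.1) fun x => ?_
  obtain ⟨Y, hY⟩ := CStarAlgebra.nonneg_iff_eq_star_mul_self.mp
    (posSemidef_vecMulVec_self_star x).nonneg
  calc 0 ≤ (Φ Y * ρ * (Φ Y)ᴴ).trace := (hρ.mul_mul_conjTranspose_same _).trace_nonneg
    _ = (vecMulVec x (star x) * ρ').trace := by
      rw [hY, h, map_mul, ← star_eq_conjTranspose, map_star, star_eq_conjTranspose,
        trace_mul_cycle]
    _ = star x ⬝ᵥ ρ' *ᵥ x := by
      rw [vecMulVec_mul, trace_vecMulVec, dotProduct_comm, dotProduct_mulVec]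

lemma supportLE (h : IsRestriction Φ ρ ρ') (h' : IsRestriction Φ σ σ') (hρ : ρ.PosSemidef)
    (hσ : σ.PosSemidef) (hρσ : SupportLE ρ σ) : SupportLE ρ' σ' := fun X hX => by
  rw [mul_eq_zero_iff_trace_eq_zero (h'.posSemidef hσ), h'.trace_conjTranspose_mul_mul,
    ← mul_eq_zero_iff_trace_eq_zero hσ] at hX
  rw [mul_eq_zero_iff_trace_eq_zero (h.posSemidef hρ), h.trace_conjTranspose_mul_mul,
    ← mul_eq_zero_iff_trace_eq_zero hρ]
  exact hρσ _ hX

lemma modularFunctional_eq (h : IsRestriction Φ ρ ρ') (h' : IsRestriction Φ σ σ') (s : ℝ)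
    (X : Matrix m m ℂ) : modularFunctional ρ' σ' s X = modularFunctional ρ σ s (Φ X) := by
  simp only [modularFunctional, h _, h' _, map_mul, ← star_eq_conjTranspose, map_star]

lemma modularResolvent_le (h : IsRestriction Φ ρ ρ') (h' : IsRestriction Φ σ σ')
    (hρ : ρ.PosSemidef) (hσ : σ.PosSemidef) {s : ℝ} (hs : 0 < s) :
    modularResolvent (h.posSemidef hρ).1 (h'.posSemidef hσ).1 s ≤
      modularResolvent hρ.1 hσ.1 s := by
  obtain ⟨X, hX⟩ := (isGreatest_modularResolvent (h.posSemidef hρ) (h'.posSemidef hσ) hs).1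
  rw [← hX, h.modularFunctional_eq h']
  exact (isGreatest_modularResolvent hρ hσ hs).2 ⟨Φ X, rfl⟩

lemma modularLogSum_le (h : IsRestriction Φ ρ ρ') (h' : IsRestriction Φ σ σ')
    (hρ : ρ.PosSemidef) (hσ : σ.PosSemidef) (hρσ : SupportLE ρ σ) {s : ℝ} (hs : 0 ≤ s) :
    modularLogSum (h.posSemidef hρ).1 (h'.posSemidef hσ).1 s ≤ modularLogSum hρ.1 hσ.1 s := by
  have hderiv : ∀ t : ℝ, 0 ≤ t → HasDerivAt
      (fun t => modularLogSum hρ.1 hσ.1 t -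
        modularLogSum (h.posSemidef hρ).1 (h'.posSemidef hσ).1 t)
      (modularResolvent hρ.1 hσ.1 t -
        modularResolvent (h.posSemidef hρ).1 (h'.posSemidef hσ).1 t) t := fun t ht =>
    (hasDerivAt_modularLogSum hρ hσ hρσ ht).fun_sub (hasDerivAt_modularLogSum (h.posSemidef hρ)
      (h'.posSemidef hσ) (h.supportLE h' hρ hσ hρσ) ht)
  have hmono := monotoneOn_of_hasDerivWithinAt_nonneg (convex_Ici (0 : ℝ))
    (fun t ht => (hderiv t ht).continuousAt.continuousWithinAt)
    (fun t ht => (hderiv t (interior_subset ht)).hasDerivWithinAt)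
    (fun t ht => sub_nonneg.mpr (h.modularResolvent_le h' hρ hσ (interior_Ici.subset ht)))
  simpa [modularLogSum_zero] using hmono Set.self_mem_Ici hs hs

theorem relEntropy_le (h : IsRestriction Φ ρ ρ') (h' : IsRestriction Φ σ σ')
    (hρ : ρ.PosSemidef) (hσ : σ.PosSemidef) (hρσ : SupportLE ρ σ) :
    relEntropy ρ' σ' ≤ relEntropy ρ σ := by
  refine le_of_tendsto_of_tendsto
    (tendsto_modularLogSum_sub_log_mul_trace (h.posSemidef hρ) (h'.posSemidef hσ).1)
    (tendsto_modularLogSum_sub_log_mul_trace hρ hσ.1) ?_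
  filter_upwards [Filter.eventually_ge_atTop 0] with s hs
  rw [h.trace_eq]
  exact sub_le_sub_right (h.modularLogSum_le h' hρ hσ hρσ hs) _

lemma supportLE_map (h : IsRestriction Φ ρ ρ') (hρ : ρ.PosSemidef) : SupportLE ρ (Φ ρ') := by
  intro X hX
  have hρ' := (h.isHermitian hρ.1).isSelfAdjoint
  -- `cfc (·⁻¹) ρ'` is the pseudo-inverse of `ρ'`, so `P` below projects onto the kernel of `ρ'`.
  have hpinv : ρ' * cfc (fun x : ℝ => x⁻¹) ρ' * ρ' = ρ' := by
    nth_rw 3 [← cfc_id' ℝ ρ' hρ']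
    rw [mul_cfc hρ', ← cfc_mul _ _ ρ' (ρ'.finite_real_spectrum.continuousOn _)
      (ρ'.finite_real_spectrum.continuousOn _)]
    simp only [mul_inv_mul_cancel, cfc_id' ℝ ρ' hρ']
  let P := 1 - cfc (fun x : ℝ => x⁻¹) ρ' * ρ'
  have hP : ρ' * P = 0 := by
    rw [Matrix.mul_sub, Matrix.mul_one, ← Matrix.mul_assoc, hpinv, sub_self]
  have hρP : ρ * Φ P = 0 := by
    rw [mul_eq_zero_iff_trace_eq_zero hρ, ← h.trace_conjTranspose_mul_mul, Matrix.mul_assoc, hP,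
      Matrix.mul_zero, trace_zero]
  have hPX : Φ P * X = X := by
    rw [map_sub, map_one, map_mul, Matrix.sub_mul, Matrix.one_mul, Matrix.mul_assoc, hX,
      Matrix.mul_zero, sub_zero]
  rw [← hPX, ← Matrix.mul_assoc, hρP, Matrix.zero_mul]

lemma relEntropy_map (h : IsRestriction Φ ρ ρ') (hρ : ρ.IsHermitian) :
    relEntropy ρ (Φ ρ') = Real.log 2 * (vonNeumannEntropy ρ' - vonNeumannEntropy ρ) := by
  have hρ' := h.isHermitian hρ
  have hlog : cfc Real.log (Φ ρ') = Φ (cfc Real.log ρ') :=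
    (Φ.map_cfc Real.log ρ' (ρ'.finite_real_spectrum.continuousOn _)
      (LinearMap.continuous_of_finiteDimensional Φ.toLinearMap) hρ'.isSelfAdjoint
      (hρ'.isSelfAdjoint.map Φ)).symm
  have hlog2 : Real.log 2 ≠ 0 := (Real.log_pos one_lt_two).ne'
  rw [relEntropy, Matrix.mul_sub, trace_sub, Complex.sub_re, hlog, trace_mul_comm ρ (Φ _), ← h,
    trace_mul_comm _ ρ', vonNeumannEntropy_eq_trace_log hρ, vonNeumannEntropy_eq_trace_log hρ']
  field_simp
  ring

end IsRestriction

end Restriction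

section Ampliation

variable {a m n : Type*} [Fintype a] [Fintype m] [Fintype n] [DecidableEq a]

lemma trace_mul_ptraceL (Z : Matrix m m ℂ) (ρ : Matrix (a × m) (a × m) ℂ) :
    (Z * ptraceL ρ).trace = (((1 : Matrix a a ℂ) ⊗ₖ Z) * ρ).trace := by
  simp only [Matrix.trace, diag_apply, Matrix.mul_apply, ptraceL, kroneckerMap_apply, one_apply,
    Fintype.sum_prod_type, ite_mul, one_mul, zero_mul, Finset.mul_sum, Finset.sum_ite_irrel,
    Finset.sum_const_zero, Finset.sum_ite_eq, Finset.mem_univ, if_true]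
  rw [Finset.sum_comm (s := (Finset.univ : Finset a))]
  exact Finset.sum_congr rfl fun i _ => Finset.sum_comm

variable [DecidableEq m] [DecidableEq n]

/-- The *-homomorphism `X ↦ 1 ⊗ X`, with the tensor product reindexed along `e`. -/
def ampliation (e : n ≃ a × m) : Matrix m m ℂ →⋆ₐ[ℂ] Matrix n n ℂ where
  toFun X := ((1 : Matrix a a ℂ) ⊗ₖ X).submatrix e e
  map_one' := by simp
  map_mul' X Y := by rw [submatrix_mul_equiv, ← mul_kronecker_mul, Matrix.one_mul]
  map_zero' := by simp
  map_add' X Y := by rw [kronecker_add, submatrix_add]; rfl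
  commutes' c := by simp [Algebra.algebraMap_eq_smul_one, kronecker_smul, submatrix_smul]
  map_star' X := by
    simp only [star_eq_conjTranspose, conjTranspose_submatrix, conjTranspose_kronecker,
      conjTranspose_one]

lemma isRestriction_ampliation (e : n ≃ a × m) (ρ : Matrix n n ℂ) :
    IsRestriction (ampliation e) ρ (ptraceL (ρ.submatrix e.symm e.symm)) := fun Z => by
  have hreindex : ampliation e Z * ρ =
      (((1 : Matrix a a ℂ) ⊗ₖ Z) * ρ.submatrix e.symm e.symm).submatrix e e := by
    rw [← submatrix_mul_equiv _ _ e e e]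
    simp [ampliation]
  rw [trace_mul_ptraceL, hreindex]
  exact (e.sum_comp _).symm

end Ampliation

section StrongSubadditivity

/-- The reindexing that brings the factor `B` to the front. -/
def leftComm (A B E : Type*) : A × B × E ≃ B × A × E :=
  (Equiv.prodAssoc A B E).symm.trans
    (((Equiv.prodComm A B).prodCongr (Equiv.refl E)).trans (Equiv.prodAssoc B A E))

lemma ptraceL_margBE (ρ : Matrix (A × B × E) (A × B × E) ℂ) : ptraceL (margBE ρ) = margE ρ := by
  ext x y
  exact Finset.sum_comm

lemma margAE_ampliation (τ : Matrix (B × E) (B × E) ℂ) :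
    margAE (ampliation (Equiv.refl (A × B × E)) τ) =
      ampliation (Equiv.refl (A × E)) (ptraceL τ) := by
  ext x y
  simp [margAE, ampliation, ptraceL, Finset.mul_sum]

theorem condMutualInfo_nonneg {ρ : Matrix (A × B × E) (A × B × E) ℂ} (hρ : ρ.PosSemidef) :
    0 ≤ condMutualInfo ρ := by
  have hBE : IsRestriction (ampliation (Equiv.refl (A × B × E))) ρ (margBE ρ) :=
    isRestriction_ampliation _ ρ
  have hAE : IsRestriction (ampliation (leftComm A B E)) ρ (margAE ρ) :=
    isRestriction_ampliation _ ρ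
  have hE : IsRestriction (ampliation (Equiv.refl (A × E))) (margAE ρ) (margE ρ) :=
    isRestriction_ampliation _ _
  have hσ : IsRestriction (ampliation (leftComm A B E))
      (ampliation (Equiv.refl (A × B × E)) (margBE ρ))
      (ampliation (Equiv.refl (A × E)) (margE ρ)) := by
    rw [← ptraceL_margBE, ← margAE_ampliation]
    exact isRestriction_ampliation _ _
  have hmono := hAE.relEntropy_le hσ hρ (posSemidef_starAlgHom_apply _ (hBE.posSemidef hρ))
    (hBE.supportLE_map hρ)
  rw [hBE.relEntropy_map hρ.1, hE.relEntropy_map (hAE.isHermitian hρ.1)] at hmono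
  have := le_of_mul_le_mul_left hmono (Real.log_pos one_lt_two)
  rw [condMutualInfo]
  linarith

end StrongSubadditivity

section Mixture

variable {m n ι : Type*} [Fintype ι]

/-- The ensemble average `∑ p i |v i⟩⟨v i|`. -/
def mixture (p : ι → ℝ) (v : ι → n → ℂ) : Matrix n n ℂ :=
  ∑ i, (p i : ℂ) • outer (v i)

lemma submatrix_mixture (p : ι → ℝ) (v : ι → n → ℂ) (f : m → n) :
    (mixture p v).submatrix f f = mixture p fun i => v i ∘ f := by
  ext x y
  simp [mixture, outer, Matrix.sum_apply, vecMulVec_apply]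

variable [Fintype m] [Fintype n]

lemma trace_outer_s10 (u : n → ℂ) : (outer u).trace = star u ⬝ᵥ u := by
  rw [outer, trace_vecMulVec, dotProduct_comm]

lemma isState_mixture {p : ι → ℝ} {v : ι → n → ℂ} (hp : ∀ i, 0 ≤ p i) (hp1 : ∑ i, p i = 1)
    (hv : ∀ i, star (v i) ⬝ᵥ v i = 1) : IsState (mixture p v) := by
  refine ⟨posSemidef_sum _ fun i _ => ?_, ?_⟩
  · exact (posSemidef_vecMulVec_self_star _).smul (Complex.zero_le_real.mpr (hp i))
  · simp only [mixture, trace_sum, trace_smul, trace_outer_s10, hv, smul_eq_mul, mul_one]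
    exact_mod_cast hp1

variable [DecidableEq ι]

lemma vonNeumannEntropy_mixture (p : ι → ℝ) {v : ι → n → ℂ}
    (hv : ∀ i j, star (v i) ⬝ᵥ v j = (1 : Matrix ι ι ℂ) i j) :
    vonNeumannEntropy (mixture p v) = vonNeumannEntropy (diagonal fun i => (p i : ℂ)) := by
  let V : Matrix n ι ℂ := (of v)ᵀ
  have hV : Vᴴ * V = 1 := by
    ext i j
    exact hv i j
  have hdiag : (diagonal fun i => (p i : ℂ)).IsHermitian :=
    isHermitian_diagonal_of_self_adjoint _ (by ext i; simp)
  have hmix : mixture p v = V * diagonal (fun i => (p i : ℂ)) * Vᴴ := by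
    ext x y
    rw [Matrix.mul_apply]
    simp only [mixture, outer, Matrix.sum_apply, Matrix.smul_apply, vecMulVec_apply, smul_eq_mul,
      mul_diagonal]
    exact Finset.sum_congr rfl fun i _ => mul_left_comm _ _ _ |>.trans (mul_assoc _ _ _).symm
  have hcycle : Vᴴ * (V * diagonal fun i => (p i : ℂ)) = diagonal fun i => (p i : ℂ) := by
    rw [← Matrix.mul_assoc, hV, Matrix.one_mul]
  rw [hmix, vonNeumannEntropy_mul_comm _ _ (isHermitian_mul_mul_conjTranspose V hdiag), hcycle]
  rwa [hcycle]

end Mixture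

section TensorVec

variable {ι m n : Type*}

/-- The product vector `|u⟩ ⊗ |v⟩`. -/
def tensorVec (u : m → ℂ) (v : n → ℂ) : m × n → ℂ :=
  fun x => u x.1 * v x.2

lemma outer_tensorVec (u : m → ℂ) (v : n → ℂ) :
    outer (tensorVec u v) = outer u ⊗ₖ outer v := by
  ext x y
  simp only [outer, tensorVec, vecMulVec_apply, kroneckerMap_apply, Pi.star_apply, star_mul']
  ring

variable [Fintype m] [Fintype n]

lemma star_tensorVec_dotProduct_tensorVec (u u' : m → ℂ) (v v' : n → ℂ) :
    star (tensorVec u v) ⬝ᵥ tensorVec u' v' = (star u ⬝ᵥ u') * (star v ⬝ᵥ v') := by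
  simp only [dotProduct, tensorVec, Pi.star_apply, star_mul', Finset.sum_mul_sum,
    Fintype.sum_prod_type]
  exact Finset.sum_congr rfl fun _ _ => Finset.sum_congr rfl fun _ _ => by ring

lemma orthonormal_tensorVec [DecidableEq ι] {u : ι → m → ℂ} {v : ι → n → ℂ}
    (hu : ∀ i, star (u i) ⬝ᵥ u i = 1) (hv : ∀ i j, star (v i) ⬝ᵥ v j = (1 : Matrix ι ι ℂ) i j)
    (i j : ι) :
    star (tensorVec (u i) (v i)) ⬝ᵥ tensorVec (u j) (v j) = (1 : Matrix ι ι ℂ) i j := by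
  rw [star_tensorVec_dotProduct_tensorVec, hv]
  rcases eq_or_ne i j with rfl | hij
  · rw [hu, one_mul]
  · rw [one_apply_ne hij, mul_zero]

end TensorVec

section Marginals

variable {k l m ι : Type*} [Fintype ι] (p : ι → ℝ)

lemma sum_mixture_tensorVec [Fintype m] {u : ι → m → ℂ} (hu : ∀ i, star (u i) ⬝ᵥ u i = 1)
    (v : ι → l → ℂ) (x y : l) :
    ∑ z, mixture p (fun i => tensorVec (u i) (v i)) (z, x) (z, y) = mixture p v x y := by
  simp only [mixture, Matrix.sum_apply, Matrix.smul_apply, outer_tensorVec, kroneckerMap_apply]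
  rw [Finset.sum_comm]
  refine Finset.sum_congr rfl fun i _ => ?_
  have htrace : ∑ z, outer (u i) z z = 1 := (trace_outer_s10 (u i)).trans (hu i)
  rw [← Finset.smul_sum, ← Finset.sum_mul, htrace, one_mul]

lemma ptraceL_mixture [Fintype l] [Fintype m] {u : ι → m → ℂ}
    (hu : ∀ i, star (u i) ⬝ᵥ u i = 1) (v : ι → l → ℂ) :
    ptraceL (mixture p fun i => tensorVec (u i) (v i)) = mixture p v :=
  ext fun x y => sum_mixture_tensorVec p hu v x y

lemma margBE_mixture [Fintype k] {α : ι → k → ℂ} (hα : ∀ i, star (α i) ⬝ᵥ α i = 1)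
    (β : ι → l → ℂ) (χ : ι → m → ℂ) :
    margBE (mixture p fun i => tensorVec (α i) (tensorVec (β i) (χ i))) =
      mixture p fun i => tensorVec (β i) (χ i) :=
  ext fun x y => sum_mixture_tensorVec p hα _ x y

lemma margAE_mixture [Fintype l] (α : ι → k → ℂ) {β : ι → l → ℂ}
    (hβ : ∀ i, star (β i) ⬝ᵥ β i = 1) (χ : ι → m → ℂ) :
    margAE (mixture p fun i => tensorVec (α i) (tensorVec (β i) (χ i))) =
      mixture p fun i => tensorVec (α i) (χ i) := by
  have hswap (i : ι) : tensorVec (α i) (tensorVec (β i) (χ i)) ∘ (leftComm k l m).symm =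
      tensorVec (β i) (tensorVec (α i) (χ i)) := funext fun _ => mul_left_comm _ _ _
  have hreindex := submatrix_mixture p (fun i => tensorVec (α i) (tensorVec (β i) (χ i)))
    (leftComm k l m).symm
  simp only [hswap] at hreindex
  ext x y
  rw [← sum_mixture_tensorVec p hβ (fun i => tensorVec (α i) (χ i)), ← hreindex]
  rfl

lemma margAB_mixture [Fintype m] (α : ι → k → ℂ) (β : ι → l → ℂ) {χ : ι → m → ℂ}
    (hχ : ∀ i, star (χ i) ⬝ᵥ χ i = 1) :
    margAB (mixture p fun i => tensorVec (α i) (tensorVec (β i) (χ i))) =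
      mixture p fun i => tensorVec (α i) (β i) := by
  let f : m × k × l → k × l × m := fun x => (x.2.1, x.2.2, x.1)
  have hrotate (i : ι) : tensorVec (α i) (tensorVec (β i) (χ i)) ∘ f =
      tensorVec (χ i) (tensorVec (α i) (β i)) :=
    funext fun _ => (mul_assoc _ _ _).symm.trans (mul_comm _ _)
  have hreindex := submatrix_mixture p (fun i => tensorVec (α i) (tensorVec (β i) (χ i))) f
  simp only [hrotate] at hreindex
  ext x y
  rw [← sum_mixture_tensorVec p hχ (fun i => tensorVec (α i) (β i)), ← hreindex]
  rfl

lemma condMutualInfo_mixture [DecidableEq ι] [Fintype k] [Fintype l] [Fintype m]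
    {α : ι → k → ℂ} {β : ι → l → ℂ} {χ : ι → m → ℂ}
    (hα : ∀ i, star (α i) ⬝ᵥ α i = 1) (hβ : ∀ i, star (β i) ⬝ᵥ β i = 1)
    (hχ : ∀ i j, star (χ i) ⬝ᵥ χ j = (1 : Matrix ι ι ℂ) i j) :
    condMutualInfo (mixture p fun i => tensorVec (α i) (tensorVec (β i) (χ i))) = 0 := by
  rw [condMutualInfo, ← ptraceL_margBE, margAE_mixture p α hβ, margBE_mixture p hα,
    ptraceL_mixture p hβ, vonNeumannEntropy_mixture p (orthonormal_tensorVec hα hχ),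
    vonNeumannEntropy_mixture p (orthonormal_tensorVec hβ hχ),
    vonNeumannEntropy_mixture p (orthonormal_tensorVec hα (orthonormal_tensorVec hβ hχ)),
    vonNeumannEntropy_mixture p hχ]
  ring

end Marginals

lemma star_dotProduct_self_eq_one {u : A → ℂ} (hu : ∑ a, ‖u a‖ ^ 2 = 1) :
    star u ⬝ᵥ u = 1 := by
  simp only [dotProduct, Pi.star_apply, Complex.star_def, Complex.conj_mul']
  exact_mod_cast hu

/-- Squashed entanglement vanishes on separable states. -/
theorem squashedEntanglement_eq_zero_of_separable
    {A B : Type*} [Fintype A] [Fintype B]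
    (ρ : Matrix (A × B) (A × B) ℂ)
    (n : ℕ) (p : Fin n → ℝ) (ψ : Fin n → A → ℂ) (φ : Fin n → B → ℂ)
    (hp : ∀ i, 0 ≤ p i) (hp1 : (∑ i, p i) = 1)
    (hψ : ∀ i, ∑ a, ‖ψ i a‖ ^ 2 = 1) (hφ : ∀ i, ∑ b, ‖φ i b‖ ^ 2 = 1)
    (hsep : ρ = ∑ i, (p i : ℂ) • (outer (ψ i) ⊗ₖ outer (φ i))) :
    Esq ρ = 0 := by
  have hψ' := fun i => star_dotProduct_self_eq_one (hψ i)
  have hφ' := fun i => star_dotProduct_self_eq_one (hφ i)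
  let χ : Fin n → Fin n → ℂ := fun i => Pi.single i 1
  have hχ (i j : Fin n) : star (χ i) ⬝ᵥ χ j = (1 : Matrix (Fin n) (Fin n) ℂ) i j := by
    simp [χ, one_apply, Pi.single_apply, eq_comm]
  have hχ' (i : Fin n) : star (χ i) ⬝ᵥ χ i = 1 := (hχ i i).trans (one_apply_eq i)
  let ρE := mixture p fun i => tensorVec (ψ i) (tensorVec (φ i) (χ i))
  have hstate : IsState ρE := isState_mixture hp hp1 fun i => by
    simp only [star_tensorVec_dotProduct_tensorVec, hψ', hφ', hχ', mul_one]
  have hmarg : margAB ρE = ρ := by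
    rw [margAB_mixture p ψ φ hχ', hsep]
    simp only [mixture, outer_tensorVec]
  refine IsLeast.csInf_eq ⟨⟨n, ρE, hstate, hmarg, ?_⟩, ?_⟩
  · rw [condMutualInfo_mixture p hψ' hφ' hχ, mul_zero]
  · rintro _ ⟨d, τ, hτ, -, rfl⟩
    exact mul_nonneg one_half_pos.le (condMutualInfo_nonneg hτ.1)

end
end
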